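/- There exist absolute constants 0 < c ≤ C such that for every θ ∈ (0,1) and every positive integer n, c · n^{(3-θ)/2} θ^{-1} (1-θ)^{-2} ≤ ∫_{A} G(s,t,u,v) ds dt du dv ≤ C · n^{(3-θ)/2} θ^{-1} (1-θ)^{-2}, where A = { (s,t,u,v) ∈ (0,∞)⁴ : 0 < u < 1, 0 < v < n^{-1/2}, t < n^{1/4}, s ≥ n^{-1/4} u^{1/2} t }. -/

import Mathlib

open MeasureTheory Set Real

/-- The integrand `G(s,t,u,v)` from the paper's computation of the completely 1-summing
norm of the identity `OH_n → ℓ^n_p`, with `θ = 2/p'`. Here `p = (s, t, u, v)`. -/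
noncomputable def G (θ : ℝ) (n : ℕ) (p : ℝ × ℝ × ℝ × ℝ) : ℝ :=
  (n : ℝ) ^ (2 : ℕ) * p.1 ^ (-1 - 2 * θ) * p.2.1 ^ (-1 - 2 * θ) *
    min (min (min ((n : ℝ)⁻¹ * p.1 ^ (4 : ℝ) * p.2.2.1 ^ (-2 : ℝ) * p.2.2.2 ^ (-2 : ℝ))
                  ((n : ℝ)⁻¹ * p.2.1 ^ (4 : ℝ)))
             (min (p.1 ^ (4 : ℝ) * p.2.2.1 ^ (-2 : ℝ)) (p.2.1 ^ (4 : ℝ) * p.2.2.2 ^ (-2 : ℝ))))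
        (min (min (p.2.2.1 ^ (-2 : ℝ) * p.2.2.2 ^ (-2 : ℝ)) (p.2.2.1 ^ (-2 : ℝ)))
             (min 1 (p.2.2.2 ^ (-2 : ℝ))))

/-- The region of integration. -/
def A (n : ℕ) : Set (ℝ × ℝ × ℝ × ℝ) :=
  {p | 0 < p.1 ∧ 0 < p.2.1 ∧ 0 < p.2.2.1 ∧ 0 < p.2.2.2 ∧ p.2.2.1 < 1 ∧ p.2.2.2 < (n : ℝ) ^ (-(1/2) : ℝ) ∧ p.2.1 < (n : ℝ) ^ ((1:ℝ)/4) ∧ (n : ℝ) ^ (-(1/4) : ℝ) * p.2.2.1 ^ ((1:ℝ)/2) * p.2.1 ≤ p.1}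

/-!
On `A` the minimum is `n⁻¹ t⁴`, so `G = n s^(-1-2θ) t^(3-2θ)`. Moreover `A` is the set of points above
the graph of `n^(-1/4) u^(1/2) t` over the box `0 < t < n^(1/4)`, `0 < u < 1`, `0 < v < n^(-1/2)`.
Integrating `s` out leaves a constant times `t^(3-4θ) u^(-θ)`, and the integral over the box
factorises. The factor `θ⁻¹` comes from the tail in `s`; each of the `t`- and `u`-integrals
contributes one factor `(1-θ)⁻¹`. In fact the integral equals `n^((3-θ)/2) θ⁻¹ (1-θ)⁻² / 8`.
-/

section Tonelli

variable {α β : Type*} [MeasurableSpace α] [MeasurableSpace β] {μ : Measure α} {ν : Measure β}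
  [SFinite μ] [SFinite ν]

lemma setLIntegral_prod_mul {s : Set α} {t : Set β} {f : α → ENNReal}
    {g : β → ENNReal} (hf : AEMeasurable f (μ.restrict s)) (hg : AEMeasurable g (ν.restrict t)) :
    ∫⁻ z in s ×ˢ t, f z.1 * g z.2 ∂μ.prod ν = (∫⁻ x in s, f x ∂μ) * ∫⁻ y in t, g y ∂ν := by
  rw [← Measure.prod_restrict, lintegral_prod_mul hf hg]

variable [TopologicalSpace α] [PartialOrder α] [OrderClosedTopology α] [SecondCountableTopology α]
  [OpensMeasurableSpace α] {D : Set β} {f : β → α}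

lemma measurableSet_epigraph (hD : MeasurableSet D) (hf : Measurable f) :
    MeasurableSet {p : α × β | p.2 ∈ D ∧ f p.2 ≤ p.1} :=
  (measurable_snd hD).inter (measurableSet_le (hf.comp measurable_snd) measurable_fst)

lemma setLIntegral_epigraph (hD : MeasurableSet D) (hf : Measurable f)
    {F : α × β → ENNReal} (hF : Measurable F) :
    ∫⁻ p in {p : α × β | p.2 ∈ D ∧ f p.2 ≤ p.1}, F p ∂μ.prod ν =
      ∫⁻ y in D, ∫⁻ x in Ici (f y), F (x, y) ∂μ ∂ν := by
  have hE := measurableSet_epigraph hD hf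
  rw [← lintegral_indicator hE, lintegral_prod_symm' _ (hF.indicator hE), ← lintegral_indicator hD]
  refine lintegral_congr fun y => ?_
  by_cases hy : y ∈ D
  · have hslice : (fun x => (x, y)) ⁻¹' {p : α × β | p.2 ∈ D ∧ f p.2 ≤ p.1} = Ici (f y) := by
      ext x
      exact and_iff_right hy
    rw [indicator_of_mem hy, ← lintegral_indicator measurableSet_Ici, ← hslice]
    rfl
  · simp [hy]

end Tonelli

section PowerIntegrals

lemma lintegral_Ici_rpow {a x : ℝ} (ha : a < -1) (hx : 0 < x) :
    ∫⁻ s in Ici x, ENNReal.ofReal (s ^ a) = ENNReal.ofReal (-x ^ (a + 1) / (a + 1)) := by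
  have hnonneg : 0 ≤ᵐ[volume.restrict (Ioi x)] fun s : ℝ => s ^ a := by
    filter_upwards [ae_restrict_mem measurableSet_Ioi] with s hs
    exact rpow_nonneg (hx.trans hs).le a
  rw [setLIntegral_congr Ioi_ae_eq_Ici.symm,
    ← ofReal_integral_eq_lintegral_ofReal (integrableOn_Ioi_rpow_of_lt ha hx) hnonneg,
    integral_Ioi_rpow_of_lt ha hx]

lemma lintegral_Ioo_zero_rpow {r b : ℝ} (hr : -1 < r) (hb : 0 ≤ b) :
    ∫⁻ t in Ioo 0 b, ENNReal.ofReal (t ^ r) = ENNReal.ofReal (b ^ (r + 1) / (r + 1)) := by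
  have hint : IntegrableOn (fun t : ℝ => t ^ r) (Ioc 0 b) :=
    (intervalIntegrable_iff_integrableOn_Ioc_of_le hb).1
      (intervalIntegral.intervalIntegrable_rpow' hr)
  have hnonneg : 0 ≤ᵐ[volume.restrict (Ioc 0 b)] fun t : ℝ => t ^ r := by
    filter_upwards [ae_restrict_mem measurableSet_Ioc] with t ht
    exact rpow_nonneg ht.1.le r
  rw [setLIntegral_congr Ioo_ae_eq_Ioc, ← ofReal_integral_eq_lintegral_ofReal hint hnonneg,
    ← intervalIntegral.integral_of_le hb, integral_rpow (Or.inl hr),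
    zero_rpow (by linarith), sub_zero]

lemma lintegral_box_rpow {a b c p q r : ℝ} (ha : 0 ≤ a) (hb : 0 ≤ b) (hc : 0 ≤ c)
    (hp : -1 < p) (hq : -1 < q) (hr : -1 < r) :
    ∫⁻ y in Ioo 0 a ×ˢ (Ioo 0 b ×ˢ Ioo 0 c),
        ENNReal.ofReal (y.1 ^ p) * (ENNReal.ofReal (y.2.1 ^ q) * ENNReal.ofReal (y.2.2 ^ r)) =
      ENNReal.ofReal (a ^ (p + 1) / (p + 1)) *
        (ENNReal.ofReal (b ^ (q + 1) / (q + 1)) * ENNReal.ofReal (c ^ (r + 1) / (r + 1))) := by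
  rw [← lintegral_Ioo_zero_rpow hp ha, ← lintegral_Ioo_zero_rpow hq hb,
    ← lintegral_Ioo_zero_rpow hr hc, Measure.volume_eq_prod, Measure.volume_eq_prod,
    ← setLIntegral_prod_mul (by fun_prop) (by fun_prop)]
  exact setLIntegral_prod_mul (f := fun t => ENNReal.ofReal (t ^ p))
    (g := fun z : ℝ × ℝ => ENNReal.ofReal (z.1 ^ q) * ENNReal.ofReal (z.2 ^ r))
    (by fun_prop) (by fun_prop)

end PowerIntegrals

section Region

/-- The box of all `(t, u, v)` over which the region `A n` lies, for `N = n`. -/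
def regionBase (N : ℝ) : Set (ℝ × ℝ × ℝ) :=
  Ioo 0 (N ^ ((1 : ℝ) / 4)) ×ˢ (Ioo 0 1 ×ˢ Ioo 0 (N ^ (-(1 / 2) : ℝ)))

/-- The lower bound `N^(-1/4) u^(1/2) t` for `s` on the fibre of `A n` over `y = (t, u, v)`,
for `N = n`. -/
noncomputable def regionFloor (N : ℝ) (y : ℝ × ℝ × ℝ) : ℝ :=
  N ^ (-(1 / 4) : ℝ) * y.2.1 ^ ((1 : ℝ) / 2) * y.1

lemma measurableSet_regionBase (N : ℝ) : MeasurableSet (regionBase N) :=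
  measurableSet_Ioo.prod (measurableSet_Ioo.prod measurableSet_Ioo)

lemma measurable_regionFloor (N : ℝ) : Measurable (regionFloor N) := by
  unfold regionFloor
  fun_prop

lemma regionFloor_pos {N : ℝ} (hN : 0 < N) {y : ℝ × ℝ × ℝ} (hy : y ∈ regionBase N) :
    0 < regionFloor N y :=
  mul_pos (mul_pos (rpow_pos_of_pos hN _) (rpow_pos_of_pos hy.2.1.1 _)) hy.1.1

lemma regionFloor_rpow {N : ℝ} (hN : 0 < N) {y : ℝ × ℝ × ℝ} (hy : y ∈ regionBase N) (a : ℝ) :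
    regionFloor N y ^ a = N ^ (-(a / 4)) * y.2.1 ^ (a / 2) * y.1 ^ a := by
  obtain ⟨⟨ht, -⟩, ⟨hu, -⟩, -⟩ := hy
  rw [regionFloor, mul_rpow (by positivity) ht.le, mul_rpow (by positivity) (by positivity),
    ← rpow_mul hN.le, ← rpow_mul hu.le]
  ring_nf

lemma A_eq_epigraph {n : ℕ} (hn : 0 < n) :
    A n = {p | p.2 ∈ regionBase n ∧ regionFloor n p.2 ≤ p.1} := by
  ext ⟨s, t, u, v⟩
  constructor
  · rintro ⟨-, ht, hu, hv, hu1, hvn, htn, hst⟩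
    exact ⟨⟨⟨ht, htn⟩, ⟨hu, hu1⟩, hv, hvn⟩, hst⟩
  · rintro ⟨hy, hst⟩
    have hs : 0 < s := (regionFloor_pos (Nat.cast_pos.2 hn) hy).trans_le hst
    obtain ⟨⟨ht, htn⟩, ⟨hu, hu1⟩, hv, hvn⟩ := hy
    exact ⟨hs, ht, hu, hv, hu1, hvn, htn, hst⟩

lemma measurableSet_A {n : ℕ} (hn : 0 < n) : MeasurableSet (A n) := by
  rw [A_eq_epigraph hn]
  exact measurableSet_epigraph (measurableSet_regionBase n) (measurable_regionFloor n)

lemma inv_mul_rpow_four_le_of_regionFloor_le {N s : ℝ} (hN : 0 < N) {y : ℝ × ℝ × ℝ}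
    (hy : y ∈ regionBase N) (hs : regionFloor N y ≤ s) :
    N⁻¹ * y.1 ^ (4 : ℝ) ≤ s ^ (4 : ℝ) * y.2.1 ^ (-2 : ℝ) := by
  have hu : 0 < y.2.1 := hy.2.1.1
  calc N⁻¹ * y.1 ^ (4 : ℝ)
      = regionFloor N y ^ (4 : ℝ) * y.2.1 ^ (-2 : ℝ) := by
        rw [regionFloor_rpow hN hy, div_self four_ne_zero, rpow_neg_one,
          show (4 : ℝ) / 2 = 2 by norm_num, rpow_neg hu.le]
        field_simp
    _ ≤ s ^ (4 : ℝ) * y.2.1 ^ (-2 : ℝ) := by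
        gcongr
        exact (regionFloor_pos hN hy).le

end Region

section Integrand

lemma measurable_G (θ : ℝ) (n : ℕ) : Measurable (G θ n) := by
  unfold G
  fun_prop

-- The minimum in `G` with `S = s⁴`, `T = t⁴`, `U = u⁻²` and `V = v⁻²`.
lemma min_terms_eq_inv_mul {N S T U V : ℝ} (hN : 1 ≤ N) (hT : 0 ≤ T) (hTN : T ≤ N) (hU : 1 ≤ U)
    (hNV : N ≤ V) (hTS : N⁻¹ * T ≤ S * U) :
    min (min (min (N⁻¹ * S * U * V) (N⁻¹ * T)) (min (S * U) (T * V)))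
      (min (min (U * V) U) (min 1 V)) = N⁻¹ * T := by
  have hN₀ : 0 < N := one_pos.trans_le hN
  have hV : 1 ≤ V := hN.trans hNV
  have hT_one : N⁻¹ * T ≤ 1 := inv_mul_le_one_of_le₀ hTN hN₀.le
  have hUV : 1 ≤ U * V := one_le_mul_of_one_le_of_one_le hU hV
  have hTV : N⁻¹ * T ≤ T * V := by
    rw [mul_comm T V]
    exact mul_le_mul_of_nonneg_right ((inv_le_one_of_one_le₀ hN).trans hV) hT
  have hSUV : N⁻¹ * T ≤ N⁻¹ * S * U * V := by
    have hSU : 0 ≤ S * U := le_trans (by positivity) hTS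
    calc N⁻¹ * T ≤ S * U := hTS
      _ = N⁻¹ * (S * U) * N := by field_simp
      _ ≤ N⁻¹ * (S * U) * V := by gcongr
      _ = N⁻¹ * S * U * V := by ring
  rw [min_eq_right hSUV, min_eq_left (le_min hTS hTV), min_eq_left]
  exact le_min (le_min (hT_one.trans hUV) (hT_one.trans hU)) (le_min hT_one (hT_one.trans hV))

lemma G_eq_of_mem_A (θ : ℝ) {n : ℕ} (hn : 0 < n) {p : ℝ × ℝ × ℝ × ℝ} (hp : p ∈ A n) :
    G θ n p = n * p.2.1 ^ (3 - 2 * θ) * p.1 ^ (-1 - 2 * θ) := by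
  obtain ⟨hy, hst⟩ := (A_eq_epigraph hn).subset hp
  obtain ⟨s, t, u, v⟩ := p
  have hN : (0 : ℝ) < n := Nat.cast_pos.2 hn
  have hTS := inv_mul_rpow_four_le_of_regionFloor_le hN hy hst
  obtain ⟨⟨ht, htn⟩, ⟨hu, hu1⟩, hv, hvn⟩ := hy
  dsimp only at ht htn hu hu1 hv hvn hTS ⊢
  have hTN : t ^ (4 : ℝ) ≤ n :=
    (le_rpow_inv_iff_of_pos ht.le hN.le four_pos).1 (by simpa only [one_div] using htn.le)
  have hU : 1 ≤ u ^ (-2 : ℝ) := one_le_rpow_of_pos_of_le_one_of_nonpos hu hu1.le (by norm_num)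
  have hNV : (n : ℝ) ≤ v ^ (-2 : ℝ) :=
    (le_rpow_inv_iff_of_neg hv hN (by norm_num)).1 (by
      simpa only [one_div, inv_neg] using hvn.le)
  have ht_rpow : t ^ (3 - 2 * θ) = t ^ (-1 - 2 * θ) * t ^ (4 : ℝ) := by
    rw [← rpow_add ht]
    ring_nf
  rw [G, min_terms_eq_inv_mul (Nat.one_le_cast.2 hn) (by positivity) hTN hU hNV hTS, ht_rpow]
  field_simp

end Integrand

section Evaluation

variable {θ : ℝ} {n : ℕ}

-- The factor `v ^ 0` gives the right-hand side the shape of the integrand in `lintegral_box_rpow`.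
lemma lintegral_G_fiber (hθ : 0 < θ) (hn : 0 < n) {y : ℝ × ℝ × ℝ} (hy : y ∈ regionBase n) :
    ∫⁻ s in Ici (regionFloor n y), ENNReal.ofReal (G θ n (s, y)) =
      ENNReal.ofReal ((n : ℝ) ^ (1 + θ / 2) / (2 * θ)) * (ENNReal.ofReal (y.1 ^ (3 - 4 * θ)) *
        (ENNReal.ofReal (y.2.1 ^ (-θ)) * ENNReal.ofReal (y.2.2 ^ (0 : ℝ)))) := by
  have hN : (0 : ℝ) < n := Nat.cast_pos.2 hn
  have ht : 0 < y.1 := hy.1.1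
  have hu : 0 < y.2.1 := hy.2.1.1
  have hG : ∀ s ∈ Ici (regionFloor n y), ENNReal.ofReal (G θ n (s, y)) =
      ENNReal.ofReal (n * y.1 ^ (3 - 2 * θ)) * ENNReal.ofReal (s ^ (-1 - 2 * θ)) := by
    intro s hs
    have hsy : (s, y) ∈ A n := (A_eq_epigraph hn).superset ⟨hy, hs⟩
    rw [G_eq_of_mem_A θ hn hsy,
      ENNReal.ofReal_mul (by positivity)]
  rw [setLIntegral_congr_fun measurableSet_Ici hG, lintegral_const_mul _ (by fun_prop),
    lintegral_Ici_rpow (by linarith) (regionFloor_pos hN hy),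
    show -1 - 2 * θ + 1 = -2 * θ by ring, regionFloor_rpow hN hy, rpow_zero, ENNReal.ofReal_one,
    mul_one, ← ENNReal.ofReal_mul (by positivity), ← ENNReal.ofReal_mul (by positivity),
    ← ENNReal.ofReal_mul (by positivity)]
  have ht_rpow : y.1 ^ (3 - 4 * θ) = y.1 ^ (3 - 2 * θ) * y.1 ^ (-2 * θ) := by
    rw [← rpow_add ht]
    ring_nf
  rw [ht_rpow, rpow_one_add' hN.le (by positivity), show -(-2 * θ / 4) = θ / 2 by ring,
    show -2 * θ / 2 = -θ by ring]
  congr 1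
  field_simp

lemma lintegral_regionBase_rpow (hθ1 : θ < 1) {N : ℝ} (hN : 0 < N) :
    ∫⁻ y in regionBase N, ENNReal.ofReal (y.1 ^ (3 - 4 * θ)) *
        (ENNReal.ofReal (y.2.1 ^ (-θ)) * ENNReal.ofReal (y.2.2 ^ (0 : ℝ))) =
      ENNReal.ofReal (N ^ (1 / 2 - θ) / (4 * (1 - θ) ^ 2)) := by
  have hθ' : 0 < 1 - θ := sub_pos.2 hθ1
  have hN_rpow : N ^ (1 / 2 - θ) = N ^ (1 - θ) * N ^ (-(1 / 2) : ℝ) := by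
    rw [← rpow_add hN]
    ring_nf
  rw [regionBase, lintegral_box_rpow (by positivity) zero_le_one (by positivity) (by linarith)
      (by linarith) (by norm_num), ← rpow_mul hN.le, show 3 - 4 * θ + 1 = 4 * (1 - θ) by ring,
    show 1 / 4 * (4 * (1 - θ)) = 1 - θ by ring, show -θ + 1 = 1 - θ by ring, one_rpow, zero_add,
    rpow_one, div_one, ← ENNReal.ofReal_mul (one_div_pos.2 hθ').le,
    ← ENNReal.ofReal_mul (by positivity), hN_rpow]
  congr 1
  field_simp

lemma lintegral_G_A (hθ : 0 < θ) (hθ1 : θ < 1) (hn : 0 < n) :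
    ∫⁻ p in A n, ENNReal.ofReal (G θ n p) =
      ENNReal.ofReal ((n : ℝ) ^ ((3 - θ) / 2) * θ ^ (-1 : ℝ) * (1 - θ) ^ (-2 : ℝ) / 8) := by
  have hN : (0 : ℝ) < n := Nat.cast_pos.2 hn
  have hθ' : 0 < 1 - θ := sub_pos.2 hθ1
  have hN_rpow : (n : ℝ) ^ ((3 - θ) / 2) = n ^ (1 + θ / 2) * n ^ (1 / 2 - θ) := by
    rw [← rpow_add hN]
    ring_nf
  rw [A_eq_epigraph hn, Measure.volume_eq_prod,
    setLIntegral_epigraph (measurableSet_regionBase n) (measurable_regionFloor n)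
      (measurable_G θ n).ennreal_ofReal,
    setLIntegral_congr_fun (measurableSet_regionBase n) fun y hy => lintegral_G_fiber hθ hn hy,
    lintegral_const_mul _ (by fun_prop), lintegral_regionBase_rpow hθ1 hN,
    ← ENNReal.ofReal_mul (by positivity), hN_rpow, rpow_neg_one, rpow_neg hθ'.le, rpow_two]
  congr 1
  field_simp
  norm_num

theorem integral_G_A (hθ : 0 < θ) (hθ1 : θ < 1) (hn : 0 < n) :
    ∫ p in A n, G θ n p =
      (n : ℝ) ^ ((3 - θ) / 2) * θ ^ (-1 : ℝ) * (1 - θ) ^ (-2 : ℝ) / 8 := by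
  have : 0 < 1 - θ := sub_pos.2 hθ1
  have hG_nonneg : 0 ≤ᵐ[volume.restrict (A n)] G θ n := by
    filter_upwards [ae_restrict_mem (measurableSet_A hn)] with p hp
    have hs : 0 < p.1 := hp.1
    have ht : 0 < p.2.1 := hp.2.1
    rw [G_eq_of_mem_A θ hn hp, Pi.zero_apply]
    positivity
  rw [integral_eq_lintegral_of_nonneg_ae hG_nonneg (measurable_G θ n).aestronglyMeasurable,
    lintegral_G_A hθ hθ1 hn, ENNReal.toReal_ofReal (by positivity)]

end Evaluation

theorem stmt_6 :
    ∃ c C : ℝ, 0 < c ∧ c ≤ C ∧ ∀ θ : ℝ, 0 < θ → θ < 1 → ∀ n : ℕ, 0 < n →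
      c * ((n : ℝ) ^ ((3 - θ) / 2) * θ ^ (-1 : ℝ) * (1 - θ) ^ (-2 : ℝ)) ≤ (∫ p in A n, G θ n p) ∧
      (∫ p in A n, G θ n p) ≤ C * ((n : ℝ) ^ ((3 - θ) / 2) * θ ^ (-1 : ℝ) * (1 - θ) ^ (-2 : ℝ)) := by
  refine ⟨1 / 8, 1 / 8, by norm_num, le_rfl, fun θ hθ hθ1 n hn => ?_⟩
  rw [integral_G_A hθ hθ1 hn, one_div_mul_eq_div]
  exact ⟨le_rfl, le_rfl⟩
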